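/- arXiv:math/0310326 — 2 statements merged into one kernel-verified Lean document; each statement's English description precedes it below -/
import Mathlib

section
/- The number of perfect matchings of the 8×8 grid graph, i.e. the number of domino tilings of a standard chessboard, equals 12988816. -/
/-- The m×n grid graph on vertex set Fin m × Fin n: (x,y) ~ (x',y') iff |x-x'|+|y-y'| = 1. -/
def gridGraph (m n : ℕ) : SimpleGraph (Fin m × Fin n) :=
  SimpleGraph.fromRel (fun u v =>
    (u.1 = v.1 ∧ u.2.val + 1 = v.2.val) ∨ (u.2 = v.2 ∧ u.1.val + 1 = v.1.val))

/-- A perfect matching of a graph `G` is a set of edges of `G` covering each vertex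
exactly once. -/
def IsPerfectMatchingSet {V : Type*} (G : SimpleGraph V) (M : Finset (Sym2 V)) : Prop :=
  (∀ e ∈ M, e ∈ G.edgeSet) ∧ ∀ v : V, ∃! e, e ∈ M ∧ v ∈ e

/-- The number of perfect matchings of `G`. -/
noncomputable def numPerfectMatchings {V : Type*} (G : SimpleGraph V) : ℕ :=
  Nat.card {M : Finset (Sym2 V) // IsPerfectMatchingSet G M}

/-!
Fix a vertex `v` of a vertex set `A`. A matching covering exactly `A` joins `v` to one of its
neighbours `u ∈ A`, and what remains is a matching covering exactly `A \ {v, u}`; so the number of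
matchings covering `A` is the sum of the numbers for `A \ {v, u}`. Rewriting a formal sum of vertex
sets by this identity therefore preserves its total count. Rewriting the single term `univ` at each
vertex in turn, while collecting like terms, ends with a multiple of the empty set, and the multiple
is the number of perfect matchings. On the `8 × 8` board in row-major order the sets that occur
differ only in a window of eight cells, so at most `2 ^ 8` terms are ever alive.
-/

section MatchingsOn

variable {V : Type*} {G : SimpleGraph V} {A : Finset V} {M : Finset (Sym2 V)} {u v : V}

/-- `M` is a set of edges of `G` that covers each vertex of `A` exactly once and no vertex
outside `A`, that is, a perfect matching of the subgraph induced on `A`. Keeping the edges in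
`Sym2 V` lets `A` vary without changing the type. -/
def IsPerfectMatchingOn (G : SimpleGraph V) (A : Finset V) (M : Finset (Sym2 V)) : Prop :=
  (∀ e ∈ M, e ∈ G.edgeSet) ∧ (∀ e ∈ M, ∀ v ∈ e, v ∈ A) ∧ ∀ v ∈ A, ∃! e, e ∈ M ∧ v ∈ e

lemma isPerfectMatchingOn_univ [Fintype V] :
    IsPerfectMatchingOn G Finset.univ M ↔ IsPerfectMatchingSet G M := by
  simp [IsPerfectMatchingOn, IsPerfectMatchingSet]

lemma isPerfectMatchingOn_empty : IsPerfectMatchingOn G ∅ M ↔ M = ∅ := by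
  constructor
  · rintro ⟨-, support, -⟩
    refine Finset.eq_empty_of_forall_notMem fun e he ↦ ?_
    exact Finset.notMem_empty _ (support e he _ e.out_fst_mem)
  · rintro rfl
    simp [IsPerfectMatchingOn]

lemma IsPerfectMatchingOn.notMem_of_notMem (hM : IsPerfectMatchingOn G A M) (hv : v ∉ A) :
    s(v, u) ∉ M :=
  fun hvu ↦ hv (hM.2.1 _ hvu v (Sym2.mem_mk_left v u))

lemma IsPerfectMatchingOn.exists_adj (hM : IsPerfectMatchingOn G A M) (hv : v ∈ A) :
    ∃ u ∈ A, G.Adj v u ∧ s(v, u) ∈ M := by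
  obtain ⟨e, ⟨he, hve⟩, -⟩ := hM.2.2 v hv
  obtain ⟨u, rfl⟩ := Sym2.mem_iff_exists.1 hve
  exact ⟨u, hM.2.1 _ he u (Sym2.mem_mk_right v u), hM.1 _ he, he⟩

lemma IsPerfectMatchingOn.eq_of_mem_of_mem (hM : IsPerfectMatchingOn G A M) (hv : v ∈ A) {w : V}
    (hu : s(v, u) ∈ M) (hw : s(v, w) ∈ M) : u = w :=
  Sym2.congr_right.1 <|
    (hM.2.2 v hv).unique ⟨hu, Sym2.mem_mk_left v u⟩ ⟨hw, Sym2.mem_mk_left v w⟩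

variable [DecidableEq V]

lemma IsPerfectMatchingOn.erase (hM : IsPerfectMatchingOn G A M) (hvu : s(v, u) ∈ M) :
    IsPerfectMatchingOn G (A \ {v, u}) (M.erase s(v, u)) := by
  obtain ⟨edges, support, cover⟩ := hM
  refine ⟨fun e he ↦ edges e (Finset.mem_of_mem_erase he), fun e he w hw ↦ ?_, fun w hw ↦ ?_⟩
  · obtain ⟨hne, heM⟩ := Finset.mem_erase.1 he
    have hwA : w ∈ A := support e heM w hw
    have hw_pair : w ∉ s(v, u) := fun hw' ↦ hne ((cover w hwA).unique ⟨heM, hw⟩ ⟨hvu, hw'⟩)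
    simpa [hwA] using hw_pair
  · have hw_pair : w ∉ s(v, u) := by simpa using (Finset.mem_sdiff.1 hw).2
    obtain ⟨e, ⟨he, hwe⟩, unique⟩ := cover w (Finset.mem_sdiff.1 hw).1
    have hne : e ≠ s(v, u) := fun h ↦ hw_pair (h ▸ hwe)
    exact ⟨e, ⟨Finset.mem_erase.2 ⟨hne, he⟩, hwe⟩,
      fun e' he' ↦ unique e' ⟨Finset.mem_of_mem_erase he'.1, he'.2⟩⟩

lemma IsPerfectMatchingOn.insert (hM : IsPerfectMatchingOn G (A \ {v, u}) M)
    (hv : v ∈ A) (hu : u ∈ A) (hadj : G.Adj v u) :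
    IsPerfectMatchingOn G A (insert s(v, u) M) := by
  obtain ⟨edges, support, cover⟩ := hM
  refine ⟨Finset.forall_mem_insert _ _ _ |>.2 ⟨hadj, edges⟩,
    Finset.forall_mem_insert _ _ _ |>.2 ⟨?_, fun e he w hw ↦
      (Finset.mem_sdiff.1 (support e he w hw)).1⟩, fun w hw ↦ ?_⟩
  · intro w hw
    rcases Sym2.mem_iff.1 hw with rfl | rfl <;> assumption
  by_cases hw_pair : w ∈ s(v, u)
  · refine ⟨s(v, u), ⟨Finset.mem_insert_self _ _, hw_pair⟩, fun e ⟨he, hwe⟩ ↦ ?_⟩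
    refine (Finset.mem_insert.1 he).resolve_right fun heM ↦ ?_
    exact (Finset.mem_sdiff.1 (support e heM w hwe)).2 (by simpa using hw_pair)
  · obtain ⟨e, ⟨he, hwe⟩, unique⟩ :=
      cover w (Finset.mem_sdiff.2 ⟨hw, by simpa using hw_pair⟩)
    refine ⟨e, ⟨Finset.mem_insert_of_mem he, hwe⟩, fun e' ⟨he', hwe'⟩ ↦ unique e' ⟨?_, hwe'⟩⟩
    exact (Finset.mem_insert.1 he').resolve_left fun h ↦ hw_pair (h ▸ hwe')

end MatchingsOn

section Counting

variable {V : Type*} [Fintype V] (G : SimpleGraph V) {A : Finset V} {u v : V}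

open Classical in
/-- The finite set of matchings of `G` that cover exactly `A`, whose cardinality satisfies the
recursion on `A`. -/
noncomputable def perfectMatchingsOn (G : SimpleGraph V) (A : Finset V) :
    Finset (Finset (Sym2 V)) :=
  {M | IsPerfectMatchingOn G A M}

variable {G} in
lemma mem_perfectMatchingsOn {M : Finset (Sym2 V)} :
    M ∈ perfectMatchingsOn G A ↔ IsPerfectMatchingOn G A M := by
  simp [perfectMatchingsOn]

lemma card_perfectMatchingsOn_univ :
    (perfectMatchingsOn G Finset.univ).card = numPerfectMatchings G := by
  classical
  simp only [perfectMatchingsOn, isPerfectMatchingOn_univ, numPerfectMatchings,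
    Nat.card_eq_fintype_card, Fintype.card_subtype]

lemma card_perfectMatchingsOn_empty : (perfectMatchingsOn G ∅).card = 1 := by
  refine Finset.card_eq_one.2 ⟨∅, ?_⟩
  ext M
  rw [mem_perfectMatchingsOn, isPerfectMatchingOn_empty, Finset.mem_singleton]

variable [DecidableEq V]

variable {G} in
lemma card_filter_mem_perfectMatchingsOn (hv : v ∈ A) (hu : u ∈ A) (hadj : G.Adj v u) :
    ((perfectMatchingsOn G A).filter (s(v, u) ∈ ·)).card =
      (perfectMatchingsOn G (A \ {v, u})).card := by
  have notMem {M} (hM : M ∈ perfectMatchingsOn G (A \ {v, u})) : s(v, u) ∉ M :=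
    (mem_perfectMatchingsOn.1 hM).notMem_of_notMem (by simp)
  refine Finset.card_nbij' (Finset.erase · s(v, u)) (insert s(v, u)) ?_ ?_ ?_ ?_
  · intro M hM
    obtain ⟨hM, hvu⟩ := Finset.mem_filter.1 hM
    exact mem_perfectMatchingsOn.2 ((mem_perfectMatchingsOn.1 hM).erase hvu)
  · intro M hM
    exact Finset.mem_filter.2
      ⟨mem_perfectMatchingsOn.2 ((mem_perfectMatchingsOn.1 hM).insert hv hu hadj),
        Finset.mem_insert_self _ _⟩
  · exact fun M hM ↦ Finset.insert_erase (Finset.mem_filter.1 hM).2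
  · exact fun M hM ↦ Finset.erase_insert (notMem hM)

variable [DecidableRel G.Adj]

lemma card_perfectMatchingsOn_eq_sum (hv : v ∈ A) :
    (perfectMatchingsOn G A).card =
      ∑ u ∈ A with G.Adj v u, (perfectMatchingsOn G (A \ {v, u})).card := by
  have partition : perfectMatchingsOn G A =
      {u ∈ A | G.Adj v u}.biUnion fun u ↦ (perfectMatchingsOn G A).filter (s(v, u) ∈ ·) := by
    ext M
    simp only [Finset.mem_biUnion, Finset.mem_filter]
    refine ⟨fun hM ↦ ?_, fun ⟨_, _, hM, _⟩ ↦ hM⟩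
    obtain ⟨u, hu, hadj, hvu⟩ := (mem_perfectMatchingsOn.1 hM).exists_adj hv
    exact ⟨u, ⟨hu, hadj⟩, hM, hvu⟩
  rw [partition, Finset.card_biUnion]
  · refine Finset.sum_congr rfl fun u hu ↦ ?_
    obtain ⟨hu, hadj⟩ := Finset.mem_filter.1 hu
    exact card_filter_mem_perfectMatchingsOn hv hu hadj
  · refine fun u _ w _ huw ↦ Finset.disjoint_filter.2 fun M hM hvu hvw ↦ huw ?_
    exact (mem_perfectMatchingsOn.1 hM).eq_of_mem_of_mem hv hvu hvw

end Counting

/-- A formal sum of finite sets of natural numbers with coefficients in `ℕ`: the pair `(S, c)`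
stands for `c` times the set of positions of the one bits of `S`. A set may occur in several
terms. -/
abbrev MaskSum := List (ℕ × ℕ)

namespace MaskSum

/-- The linear extension of `f` to formal sums. -/
def eval (f : ℕ → ℕ) (L : MaskSum) : ℕ := (L.map fun p ↦ p.2 * f p.1).sum

/-- Add the term `p` to a formal sum sorted by mask, collecting like terms. -/
def addTerm (p : ℕ × ℕ) : MaskSum → MaskSum
  | [] => [p]
  | q :: M =>
    if p.1 < q.1 then p :: q :: M
    else if p.1 = q.1 then (p.1, p.2 + q.2) :: M
    else q :: addTerm p M

/-- Addition of formal sums, collecting like terms if the second one is sorted by mask. -/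
def add (L M : MaskSum) : MaskSum := L.foldr addTerm M

/-- Delete the pair `{i, j}` from each set, dropping the sets that do not contain it. -/
def deletePair (i j : ℕ) (L : MaskSum) : MaskSum :=
  L.filterMap fun p ↦
    if p.1.testBit i && p.1.testBit j then some (p.1 ^^^ 2 ^ i ^^^ 2 ^ j, p.2) else none

/-- Replace each set containing `i` by the sum over `j` in `js` of the results of deleting
`{i, j}`. -/
def eliminate (i : ℕ) (js : List ℕ) (L : MaskSum) : MaskSum :=
  js.foldr (fun j ↦ add (deletePair i j L)) (L.filter fun p ↦ !p.1.testBit i)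

variable (f : ℕ → ℕ)

@[simp]
lemma eval_nil : eval f [] = 0 := rfl

@[simp]
lemma eval_cons (p : ℕ × ℕ) (L : MaskSum) : eval f (p :: L) = p.2 * f p.1 + eval f L := by
  simp [eval]

lemma eval_addTerm (p : ℕ × ℕ) (M : MaskSum) :
    eval f (addTerm p M) = p.2 * f p.1 + eval f M := by
  induction M with
  | nil => simp [addTerm]
  | cons q M ih =>
    rw [addTerm]
    split_ifs with hlt heq
    · simp only [eval_cons]
    · simp only [eval_cons, heq]; ring
    · simp only [eval_cons, ih]; ring

lemma eval_add (L M : MaskSum) : eval f (add L M) = eval f L + eval f M := by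
  induction L with
  | nil => simp [add]
  | cons p L ih => rw [add, List.foldr_cons, eval_addTerm, ← add, ih, eval_cons, add_assoc]

lemma eval_deletePair_cons (i j : ℕ) (p : ℕ × ℕ) (L : MaskSum) :
    eval f (deletePair i j (p :: L)) =
      (if p.1.testBit i && p.1.testBit j then p.2 * f (p.1 ^^^ 2 ^ i ^^^ 2 ^ j) else 0) +
        eval f (deletePair i j L) := by
  rw [deletePair, List.filterMap_cons]
  split_ifs <;> simp [deletePair]

lemma eval_eliminate_eq_sum (i : ℕ) (js : List ℕ) (L : MaskSum) :
    eval f (eliminate i js L) = (js.map fun j ↦ eval f (deletePair i j L)).sum +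
      eval f (L.filter fun p ↦ !p.1.testBit i) := by
  induction js with
  | nil => simp [eliminate]
  | cons j js ih =>
    rw [eliminate, List.foldr_cons, eval_add, ← eliminate, ih, List.map_cons, List.sum_cons,
      add_assoc]

variable {f}

lemma eval_eliminate {i : ℕ} {js : List ℕ}
    (hf : ∀ S : ℕ, S.testBit i →
      f S = (js.map fun j ↦ if S.testBit j then f (S ^^^ 2 ^ i ^^^ 2 ^ j) else 0).sum)
    (L : MaskSum) : eval f (eliminate i js L) = eval f L := by
  rw [eval_eliminate_eq_sum]
  induction L with
  | nil => simp [deletePair]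
  | cons p L ih =>
    simp only [eval_deletePair_cons, List.sum_map_add, eval_cons, ← ih]
    by_cases hi : p.1.testBit i
    · simp only [hf p.1 hi, ← List.sum_map_mul_left, mul_ite, mul_zero, hi, Bool.true_and,
        Bool.not_true, Bool.false_eq_true, not_false_eq_true, List.filter_cons_of_neg, add_assoc]
    · simp only [hi, Bool.false_and, Bool.false_eq_true, if_false, List.map_const',
        List.sum_replicate, smul_zero, zero_add, Bool.not_false, List.filter_cons_of_pos, eval_cons]
      ring

end MaskSum

section Elimination

variable {V : Type*} [Fintype V] {N : ℕ} (e : V ≃ Fin N)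

/-- The set of vertices whose number under `e` is the position of a one bit of `S`. -/
def maskVertices (S : ℕ) : Finset V := {v | S.testBit (e v)}

@[simp]
lemma mem_maskVertices {S : ℕ} {v : V} : v ∈ maskVertices e S ↔ S.testBit (e v) := by
  simp [maskVertices]

lemma maskVertices_zero : maskVertices e 0 = ∅ := by
  simp [maskVertices]

lemma maskVertices_two_pow_sub_one : maskVertices e (2 ^ N - 1) = Finset.univ := by
  simp [maskVertices, Nat.testBit_two_pow_sub_one]

lemma maskVertices_xor [DecidableEq V] {S : ℕ} {u v : V} (hvu : v ≠ u) (hv : S.testBit (e v))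
    (hu : S.testBit (e u)) :
    maskVertices e (S ^^^ 2 ^ (e v : ℕ) ^^^ 2 ^ (e u : ℕ)) = maskVertices e S \ {v, u} := by
  have val_eq_iff (x y : V) : (e x : ℕ) = e y ↔ x = y := by rw [Fin.val_inj, e.apply_eq_iff_eq]
  ext w
  simp only [mem_maskVertices, Nat.testBit_xor, Nat.testBit_two_pow, val_eq_iff, Finset.mem_sdiff,
    Finset.mem_insert, Finset.mem_singleton]
  by_cases hwv : w = v
  · subst hwv; simp [hv, hvu.symm]
  by_cases hwu : w = u
  · subst hwu; simp [hu, hvu]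
  simp [hwv, hwu, Ne.symm hwv, Ne.symm hwu]

variable (G : SimpleGraph V) [DecidableRel G.Adj]

/-- The numbers under `e` of the neighbours of the vertex numbered `i`. -/
def neighborNumbers (i : Fin N) : List ℕ :=
  ((List.finRange N).filter fun j ↦ G.Adj (e.symm i) (e.symm j)).map Fin.val

lemma sum_map_neighborNumbers (v : V) (g : ℕ → ℕ) :
    ((neighborNumbers e G (e v)).map g).sum = ∑ u with G.Adj v u, g (e u) := by
  rw [Finset.sum_filter, ← e.symm.sum_comp, ← Finset.sum_filter, neighborNumbers, List.map_map,
    ← List.sum_toFinset _ ((List.nodup_finRange N).filter _)]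
  simp

lemma card_perfectMatchingsOn_maskVertices {S : ℕ} {i : Fin N} (hi : S.testBit i) :
    (perfectMatchingsOn G (maskVertices e S)).card =
      ((neighborNumbers e G i).map fun j ↦ if S.testBit j then
        (perfectMatchingsOn G (maskVertices e (S ^^^ 2 ^ (i : ℕ) ^^^ 2 ^ j))).card else 0).sum := by
  classical
  obtain ⟨v, rfl⟩ := e.surjective i
  rw [card_perfectMatchingsOn_eq_sum G ((mem_maskVertices e).2 hi), sum_map_neighborNumbers,
    ← Finset.sum_filter]
  refine Finset.sum_congr (by ext u; simp [and_comm]) fun u hu ↦ ?_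
  obtain ⟨hadj, hu⟩ : G.Adj v u ∧ S.testBit (e u) := by simpa using hu
  rw [maskVertices_xor e hadj.ne hi hu]

/-- The result of eliminating the vertices of `G` from the full vertex set, in the order given
by `e`. -/
def eliminateVertices : MaskSum :=
  (List.finRange N).foldl (fun L (i : Fin N) ↦ MaskSum.eliminate i (neighborNumbers e G i) L)
    [(2 ^ N - 1, 1)]

lemma eval_eliminateVertices :
    (eliminateVertices e G).eval (fun S ↦ (perfectMatchingsOn G (maskVertices e S)).card) =
      numPerfectMatchings G := by
  rw [← card_perfectMatchingsOn_univ, ← maskVertices_two_pow_sub_one e]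
  refine List.foldlRecOn (List.finRange N) _ (motive := fun L : MaskSum ↦ L.eval _ = _)
    (by simp) fun L hL i _ ↦ ?_
  rw [MaskSum.eval_eliminate (fun S hi ↦ card_perfectMatchingsOn_maskVertices e G hi), hL]

end Elimination

theorem numPerfectMatchings_eq_of_eliminateVertices_eq {V : Type*} {N c : ℕ} (e : V ≃ Fin N)
    (G : SimpleGraph V) [DecidableRel G.Adj]
    (h : eliminateVertices e G = [(0, c)]) : numPerfectMatchings G = c := by
  have : Fintype V := Fintype.ofEquiv (Fin N) e.symm
  simp [← eval_eliminateVertices e G, h, maskVertices_zero, card_perfectMatchingsOn_empty]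

instance (m n : ℕ) : DecidableRel (gridGraph m n).Adj :=
  inferInstanceAs (DecidableRel (SimpleGraph.fromRel _).Adj)

lemma eliminateVertices_gridGraph_eight_eight :
    eliminateVertices finProdFinEquiv (gridGraph 8 8) = [(0, 12988816)] := by
  decide +kernel

/-- The number of domino tilings of a chessboard: the 8×8 grid graph has
exactly 12988816 perfect matchings. -/
theorem numPerfectMatchings_chessboard :
    numPerfectMatchings (gridGraph 8 8) = 12988816 :=
  numPerfectMatchings_eq_of_eliminateVertices_eq finProdFinEquiv _
    eliminateVertices_gridGraph_eight_eight
end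

section
/- There exists a constant C > 0 such that for all positive integers m, n with mn even, the number N(m,n) of perfect matchings of the m×n grid graph satisfies |log N(m,n) − G·m·n/π| ≤ C·(m+n), where G is Catalan's constant. In other words, the number of domino tilings of an m×n rectangle is exp(Gmn/π + O(m+n)). -/
/-- Catalan's constant G = 1 - 1/3² + 1/5² - 1/7² + ⋯ -/
noncomputable def catalanConstant : ℝ := ∑' k : ℕ, (-1 : ℝ) ^ k / (2 * k + 1) ^ 2

/-!
Let `K` be the adjacency matrix of the grid, with edges oriented along the lexicographic order and
signed by Kasteleyn's rule. Draw the vertices on a line in that order and the edges of a matching as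
arcs above it. The sign of the matching in the expansion of the determinant of the black-white block
of `K` is governed by the crossings of these arcs, and the Kasteleyn signs cancel the crossings: the
sign `(-1) ^ y` of an edge is spread over the `y` vertices that precede its larger end in its row,
each of which belongs to another edge of the matching, and what then remains of the interaction of
two edges is symmetric in the two. All matchings thus have the same sign, so that
`det (K ^ 2) = N(m, n) ^ 4` when `n` is even.

The matrix `K ^ 2` is a Kronecker sum of squares of path matrices, with eigenvalues
`-4 cos² α_j - 4 cos² β_k`, where `α_j = (j + 1) π / (m + 1)` and `β_k = (k + 1) π / (n + 1)`.
Writing `|cos α_j| = sinh a_j`, the product over `k` is the squared modulus of the Chebyshev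
polynomial `U_n` at `i sinh a_j`, which is `(cosh ((n + 1) a_j) / cosh a_j) ^ 2`. So `log N(m, n)`
is `n / 2 * ∑ j, a_j + O(m)`, and the sum over `j` is `(m + 1) / π * ∫₀^π arsinh |cos t| dt + O(1)`,
being a multiple of a Riemann sum. Finally `arsinh c = ∫₀¹ c / √(1 + a² c²) da`, and exchanging the
integrals gives `∫₀^{π/2} arsinh (cos t) dt = ∫₀¹ arctan a / a da = G`.
-/

section CrossingSign

variable {α : Type*} [LinearOrder α]

/-- The sign of the comparison of `a` with `b`: `1`, `-1` or `0` according as `a < b`, `b < a` or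
`a = b`. It is the sign of `b - a`, without requiring a subtraction. -/
def orderSign (a b : α) : ℤ :=
  if a < b then 1 else if b < a then -1 else 0

lemma orderSign_swap (a b : α) : orderSign b a = -orderSign a b := by
  unfold orderSign
  grind

lemma orderSign_sq {a b : α} (h : a ≠ b) : orderSign a b ^ 2 = 1 := by
  unfold orderSign
  grind

/-- The crossing sign of the arcs with ends `a, b` and `c, d` above a line: `-1` if they cross and
the first arc starts to the left of the second one, and `1` otherwise. -/
def crossingSign (a b c d : α) : ℤ :=
  if min a b < min c d ∧ min c d < max a b ∧ max a b < max c d then -1 else 1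

lemma crossingSign_swap_left (a b c d : α) : crossingSign b a c d = crossingSign a b c d := by
  simp only [crossingSign, min_comm, max_comm]

lemma crossingSign_swap_right (a b c d : α) : crossingSign a b d c = crossingSign a b c d := by
  simp only [crossingSign, min_comm, max_comm]

lemma crossingSign_sq (a b c d : α) : crossingSign a b c d ^ 2 = 1 := by
  unfold crossingSign
  split_ifs <;> rfl

lemma crossingSign_mul_crossingSign {a b c d : α} (hab : a ≠ b) (hac : a ≠ c) (had : a ≠ d)
    (hbc : b ≠ c) (hbd : b ≠ d) (hcd : c ≠ d) :
    crossingSign a b c d * crossingSign c d a b =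
      orderSign a c * orderSign d b * (orderSign a d * orderSign c b) := by
  unfold crossingSign orderSign
  rcases hab.lt_or_gt with h | h <;> rcases hcd.lt_or_gt with h' | h' <;>
    simp only [min_eq_left h.le, max_eq_right h.le, min_eq_right h.le, max_eq_left h.le,
      min_eq_left h'.le, max_eq_right h'.le, min_eq_right h'.le, max_eq_left h'.le] <;>
    grind

variable {N : ℕ} {b w : Fin N → α}

/-- The sign, relative to the order of `α`, of a listing of black points `b` and white points `w`.
It takes no account of any matching between the two colours. -/
def colorSign (b w : Fin N → α) : ℤ :=
  (∏ i, ∏ j ∈ Finset.Ioi i, orderSign (b i) (b j) * orderSign (w j) (w i)) *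
    ∏ i, ∏ j, orderSign (b i) (w j)

lemma colorSign_sq (hb : Function.Injective b) (hw : Function.Injective w)
    (hbw : ∀ i j, b i ≠ w j) : colorSign b w ^ 2 = 1 := by
  simp only [colorSign, mul_pow, ← Finset.prod_pow]
  rw [Finset.prod_eq_one, Finset.prod_eq_one, one_mul]
  · exact fun i _ => Finset.prod_eq_one fun j _ => orderSign_sq (hbw i j)
  · refine fun i _ => Finset.prod_eq_one fun j hj => ?_
    have hij : i ≠ j := (Finset.mem_Ioi.1 hj).ne
    rw [orderSign_sq (hb.ne hij), orderSign_sq (hw.ne hij.symm), one_mul]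

lemma colorSign_comp_perm (b w : Fin N → α) (σ : Equiv.Perm (Fin N)) :
    colorSign (b ∘ σ) w = σ.sign * colorSign b w := by
  have hblack : ∏ i, ∏ j ∈ Finset.Ioi i, orderSign (b (σ i)) (b (σ j)) =
      σ.sign * ∏ i, ∏ j ∈ Finset.Ioi i, orderSign (b i) (b j) :=
    σ.prod_Ioi_comp_eq_sign_mul_prod fun i j => orderSign_swap (b j) (b i)
  have hmixed : ∏ i, ∏ j, orderSign (b (σ i)) (w j) = ∏ i, ∏ j, orderSign (b i) (w j) :=
    Equiv.prod_comp σ fun i => ∏ j, orderSign (b i) (w j)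
  simp only [colorSign, Function.comp_apply, Finset.prod_mul_distrib, hblack, hmixed]
  ring

lemma prod_Ioi_mul_swap_mul_prod_diag {ι M : Type*} [LinearOrder ι] [Fintype ι]
    [LocallyFiniteOrderTop ι] [LocallyFiniteOrderBot ι] [CommMonoid M] (f : ι → ι → M) :
    (∏ i, ∏ j ∈ Finset.Ioi i, f i j * f j i) * ∏ i, f i i = ∏ i, ∏ j, f i j := by
  rw [Finset.prod_prod_Ioi_mul_eq_prod_prod_off_diag fun i j => f j i, ← Finset.prod_mul_distrib]
  exact Finset.prod_congr rfl fun i _ => by rw [mul_comm, Fintype.prod_eq_mul_prod_compl i]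

lemma prod_crossingSign_mul_prod_orderSign (hb : Function.Injective b) (hw : Function.Injective w)
    (hbw : ∀ i j, b i ≠ w j) :
    (∏ i, ∏ j ∈ {i}ᶜ, crossingSign (b i) (w i) (b j) (w j)) * ∏ i, orderSign (b i) (w i) =
      colorSign b w := by
  have hcross : ∀ i, ∀ j ∈ Finset.Ioi i,
      crossingSign (b i) (w i) (b j) (w j) * crossingSign (b j) (w j) (b i) (w i) =
        orderSign (b i) (b j) * orderSign (w j) (w i) *
          (orderSign (b i) (w j) * orderSign (b j) (w i)) := by
    intro i j hj
    have hij : i ≠ j := (Finset.mem_Ioi.1 hj).ne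
    exact crossingSign_mul_crossingSign (hbw i i) (hb.ne hij) (hbw i j) (hbw j i).symm (hw.ne hij)
      (hbw j j)
  calc
    _ = (∏ i, ∏ j ∈ Finset.Ioi i,
          crossingSign (b i) (w i) (b j) (w j) * crossingSign (b j) (w j) (b i) (w i)) *
            ∏ i, orderSign (b i) (w i) := by
      rw [Finset.prod_prod_Ioi_mul_eq_prod_prod_off_diag
        fun i j => crossingSign (b j) (w j) (b i) (w i)]
    _ = (∏ i, ∏ j ∈ Finset.Ioi i, orderSign (b i) (b j) * orderSign (w j) (w i)) *
          ((∏ i, ∏ j ∈ Finset.Ioi i, orderSign (b i) (w j) * orderSign (b j) (w i)) *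
            ∏ i, orderSign (b i) (w i)) := by
      rw [Finset.prod_congr rfl fun i _ => Finset.prod_congr rfl (hcross i)]
      simp only [Finset.prod_mul_distrib, mul_assoc]
    _ = colorSign b w := by
      rw [prod_Ioi_mul_swap_mul_prod_diag fun i j => orderSign (b i) (w j), colorSign]

end CrossingSign

section PerfectMatching

variable {V W : Type*} {G : SimpleGraph V} {H : SimpleGraph W}

lemma IsPerfectMatchingSet.map_iso {M : Finset (Sym2 V)} (hM : IsPerfectMatchingSet G M)
    (f : G ≃g H) :
    IsPerfectMatchingSet H (M.map ⟨Sym2.map f, Sym2.map.injective f.injective⟩) := by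
  obtain ⟨hedge, hcover⟩ := hM
  refine ⟨?_, fun w => ?_⟩
  · simp only [Finset.forall_mem_map, Function.Embedding.coeFn_mk]
    exact fun e he => f.map_mem_edgeSet_iff.2 (hedge e he)
  · obtain ⟨v, rfl⟩ := f.surjective w
    obtain ⟨e, ⟨he, hv⟩, huniq⟩ := hcover v
    refine ⟨Sym2.map f e, ⟨Finset.mem_map_of_mem _ he, Sym2.mem_map.2 ⟨v, hv, rfl⟩⟩, ?_⟩
    rintro e' ⟨he', hv'⟩
    obtain ⟨d, hd, rfl⟩ := Finset.mem_map.1 he'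
    obtain ⟨v', hv', heq⟩ := Sym2.mem_map.1 hv'
    exact congrArg (Sym2.map f) (huniq d ⟨hd, f.injective heq ▸ hv'⟩)

lemma numPerfectMatchings_congr (f : G ≃g H) :
    numPerfectMatchings G = numPerfectMatchings H := by
  refine Nat.card_congr ⟨fun M => ⟨_, M.2.map_iso f⟩, fun M => ⟨_, M.2.map_iso f.symm⟩, ?_, ?_⟩ <;>
    · refine fun M => Subtype.ext (Finset.ext fun e => ?_)
      simp [Sym2.map_map]

end PerfectMatching

/-- A colouring of the vertices of `G` in black and white for which `G` is bipartite, together with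
a listing of both colour classes by the same index type `ι`. -/
structure BalancedColoring {V : Type*} (G : SimpleGraph V) (ι : Type*) where
  vertexEquiv : ι ⊕ ι ≃ V
  not_adj_inl : ∀ i j, ¬ G.Adj (vertexEquiv (.inl i)) (vertexEquiv (.inl j))
  not_adj_inr : ∀ i j, ¬ G.Adj (vertexEquiv (.inr i)) (vertexEquiv (.inr j))

namespace BalancedColoring

variable {V ι κ : Type*} {G : SimpleGraph V} (c : BalancedColoring G ι)

/-- The `i`-th black vertex. -/
def black (i : ι) : V := c.vertexEquiv (.inl i)

/-- The `i`-th white vertex. -/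
def white (i : ι) : V := c.vertexEquiv (.inr i)

lemma black_injective : Function.Injective c.black :=
  c.vertexEquiv.injective.comp Sum.inl_injective

lemma white_injective : Function.Injective c.white :=
  c.vertexEquiv.injective.comp Sum.inr_injective

lemma black_ne_white (i j : ι) : c.black i ≠ c.white j :=
  c.vertexEquiv.injective.ne Sum.inl_ne_inr

lemma black_or_white (v : V) : (∃ i, c.black i = v) ∨ ∃ i, c.white i = v := by
  obtain ⟨i | i, rfl⟩ := c.vertexEquiv.surjective v
  exacts [.inl ⟨i, rfl⟩, .inr ⟨i, rfl⟩]

lemma black_mem_edge_iff {i j k : ι} : c.black k ∈ s(c.black i, c.white j) ↔ k = i := by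
  simp [Sym2.mem_iff, c.black_injective.eq_iff, c.black_ne_white]

lemma white_mem_edge_iff {i j k : ι} : c.white k ∈ s(c.black i, c.white j) ↔ k = j := by
  simp [Sym2.mem_iff, c.white_injective.eq_iff, (c.black_ne_white _ _).symm]

lemma edge_eq_edge_iff {i j i' j' : ι} :
    s(c.black i, c.white j) = s(c.black i', c.white j') ↔ i = i' ∧ j = j' := by
  simp [c.black_injective.eq_iff, c.white_injective.eq_iff, c.black_ne_white]

lemma exists_eq_edge {e : Sym2 V} (he : e ∈ G.edgeSet) :
    ∃ i j, e = s(c.black i, c.white j) := by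
  induction e using Sym2.ind with | _ u v
  rcases c.black_or_white u with ⟨i, rfl⟩ | ⟨i, rfl⟩ <;>
    rcases c.black_or_white v with ⟨j, rfl⟩ | ⟨j, rfl⟩
  · exact absurd he (c.not_adj_inl i j)
  · exact ⟨i, j, rfl⟩
  · exact ⟨j, i, Sym2.eq_swap⟩
  · exact absurd he (c.not_adj_inr i j)

/-- The set of pairs formed by the `σ i`-th black and the `i`-th white vertex. -/
def permMatching [Fintype ι] (σ : Equiv.Perm ι) : Finset (Sym2 V) :=
  Finset.univ.map ⟨fun i => s(c.black (σ i), c.white i), fun _ _ h => (c.edge_eq_edge_iff.1 h).2⟩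

lemma mem_permMatching_iff [Fintype ι] {σ : Equiv.Perm ι} {e : Sym2 V} :
    e ∈ c.permMatching σ ↔ ∃ i, s(c.black (σ i), c.white i) = e :=
  Finset.mem_map.trans <| exists_congr fun i => and_iff_right (Finset.mem_univ i)

lemma edge_mem_permMatching_iff [Fintype ι] {σ : Equiv.Perm ι} {i j : ι} :
    s(c.black i, c.white j) ∈ c.permMatching σ ↔ σ j = i := by
  simp [mem_permMatching_iff, c.edge_eq_edge_iff]

lemma permMatching_injective [Fintype ι] : Function.Injective c.permMatching := by
  refine fun σ τ h => Equiv.ext fun i => ?_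
  have hi : s(c.black (σ i), c.white i) ∈ c.permMatching τ :=
    h ▸ c.edge_mem_permMatching_iff.2 rfl
  exact (c.edge_mem_permMatching_iff.1 hi).symm

lemma isPerfectMatchingSet_permMatching [Fintype ι] {σ : Equiv.Perm ι}
    (hσ : ∀ i, G.Adj (c.black (σ i)) (c.white i)) : IsPerfectMatchingSet G (c.permMatching σ) := by
  refine ⟨fun e he => ?_, fun v => ?_⟩
  · obtain ⟨i, rfl⟩ := c.mem_permMatching_iff.1 he
    exact hσ i
  · obtain ⟨j, hj⟩ : ∃ j, ∀ i, v ∈ s(c.black (σ i), c.white i) ↔ i = j := by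
      rcases c.black_or_white v with ⟨k, rfl⟩ | ⟨k, rfl⟩
      · exact ⟨σ.symm k, fun i => by rw [black_mem_edge_iff, Equiv.eq_symm_apply, eq_comm]⟩
      · exact ⟨k, fun i => by rw [white_mem_edge_iff, eq_comm]⟩
    refine ⟨s(c.black (σ j), c.white j), ⟨c.edge_mem_permMatching_iff.2 rfl, (hj j).2 rfl⟩, ?_⟩
    rintro e ⟨he, hv⟩
    obtain ⟨i, rfl⟩ := c.mem_permMatching_iff.1 he
    rw [(hj i).1 hv]

lemma exists_perm_of_isPerfectMatchingSet [Fintype ι] {M : Finset (Sym2 V)}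
    (hM : IsPerfectMatchingSet G M) :
    ∃ σ : Equiv.Perm ι, (∀ i, G.Adj (c.black (σ i)) (c.white i)) ∧ c.permMatching σ = M := by
  obtain ⟨hedge, hcover⟩ := hM
  have hpartner : ∀ j, ∃ i, s(c.black i, c.white j) ∈ M := by
    intro j
    obtain ⟨e, ⟨he, hj⟩, -⟩ := hcover (c.white j)
    obtain ⟨i, k, rfl⟩ := c.exists_eq_edge (hedge e he)
    exact ⟨i, c.white_mem_edge_iff.1 hj ▸ he⟩
  choose f hf using hpartner
  have hf_inj : Function.Injective f := fun i j hij =>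
    (c.edge_eq_edge_iff.1 <| (hcover (c.black (f i))).unique
      ⟨hf i, c.black_mem_edge_iff.2 rfl⟩ ⟨hf j, c.black_mem_edge_iff.2 hij⟩).2
  let σ : Equiv.Perm ι := .ofBijective f (Finite.injective_iff_bijective.1 hf_inj)
  refine ⟨σ, fun i => hedge _ (hf i), Finset.Subset.antisymm (fun e he => ?_) fun e he => ?_⟩
  · obtain ⟨i, rfl⟩ := c.mem_permMatching_iff.1 he
    exact hf i
  · obtain ⟨i, j, rfl⟩ := c.exists_eq_edge (hedge e he)
    have huniq := (hcover (c.white j)).unique ⟨hf j, c.white_mem_edge_iff.2 rfl⟩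
      ⟨he, c.white_mem_edge_iff.2 rfl⟩
    exact c.edge_mem_permMatching_iff.2 (c.edge_eq_edge_iff.1 huniq).1

theorem numPerfectMatchings_eq_card_perm [Finite ι] :
    numPerfectMatchings G =
      Nat.card {σ : Equiv.Perm ι // ∀ i, G.Adj (c.black (σ i)) (c.white i)} := by
  have := Fintype.ofFinite ι
  refine (Nat.card_eq_of_bijective
    (fun σ => ⟨c.permMatching σ.1, c.isPerfectMatchingSet_permMatching σ.2⟩) ⟨?_, ?_⟩).symm
  · exact fun σ τ h => Subtype.ext (c.permMatching_injective (congrArg Subtype.val h))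
  · rintro ⟨M, hM⟩
    obtain ⟨σ, hσ, rfl⟩ := c.exists_perm_of_isPerfectMatchingSet hM
    exact ⟨⟨σ, hσ⟩, rfl⟩

/-- The same colouring with the black vertices listed in the order given by `σ`. -/
def permuteBlack (σ : Equiv.Perm ι) : BalancedColoring G ι where
  vertexEquiv := (σ.sumCongr (.refl ι)).trans c.vertexEquiv
  not_adj_inl i j := c.not_adj_inl (σ i) (σ j)
  not_adj_inr := c.not_adj_inr

/-- The same colouring with both colours listed by the equivalent type `κ`. -/
def reindex (e : κ ≃ ι) : BalancedColoring G κ where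
  vertexEquiv := (e.sumCongr e).trans c.vertexEquiv
  not_adj_inl i j := c.not_adj_inl (e i) (e j)
  not_adj_inr i j := c.not_adj_inr (e i) (e j)

/-- The colouring whose black vertices are those satisfying `p`, each listed with the white vertex
that a colour-reversing involution `f` assigns to it. -/
def ofInvolutive (p : V → Prop) [DecidablePred p] {f : V → V} (hf : f.Involutive)
    (hpf : ∀ v, p (f v) ↔ ¬ p v) (hG : ∀ u v, G.Adj u v → (p u ↔ ¬ p v)) :
    BalancedColoring G {v // p v} where
  vertexEquiv := ((Equiv.refl _).sumCongr
    (hf.toPerm.subtypeEquiv fun v => by simp [hpf])).trans (Equiv.sumCompl p)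
  not_adj_inl i j h := (hG _ _ h).1 i.2 j.2
  not_adj_inr i j h := (hpf i).1 ((hG _ _ h).2 fun hj => (hpf j).1 hj j.2) i.2

end BalancedColoring

section GridSigns

variable {m n : ℕ}

lemma gridGraph_adj_iff {u v : Fin m × Fin n} :
    (gridGraph m n).Adj u v ↔
      ((u.1 : ℕ) = v.1 ∧ ((u.2 : ℕ) + 1 = v.2 ∨ (v.2 : ℕ) + 1 = u.2)) ∨
        ((u.2 : ℕ) = v.2 ∧ ((u.1 : ℕ) + 1 = v.1 ∨ (v.1 : ℕ) + 1 = u.1)) := by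
  simp only [gridGraph, SimpleGraph.fromRel_adj, ne_eq, Prod.ext_iff, Fin.ext_iff]
  omega

lemma gridGraph_adj_cases_of_toLex_lt {u v : Fin m × Fin n} (h : (gridGraph m n).Adj u v)
    (huv : toLex u < toLex v) :
    (v.1 = u.1 ∧ (v.2 : ℕ) = u.2 + 1) ∨ ((v.1 : ℕ) = u.1 + 1 ∧ v.2 = u.2) := by
  simp only [gridGraph_adj_iff, Prod.Lex.lt_iff, ofLex_toLex, Fin.lt_def, Fin.ext_iff] at *
  omega

/-- The Kasteleyn sign of an edge `uv` of the grid: edges along the first coordinate carry the sign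
`(-1) ^ y`, where `y` is their second coordinate, and the other edges carry the sign `1`. -/
def kasteleynSign (u v : Fin m × Fin n) : ℤ :=
  if u.1 = v.1 then 1 else (-1) ^ (u.2 : ℕ)

/-- The contribution of the cell `z` to the Kasteleyn sign of the edge `uv`: the `y` cells that
precede the larger end of an edge along the first coordinate within its row contribute `-1` each. -/
def cellSign (u v z : Fin m × Fin n) : ℤ :=
  if u.1 ≠ v.1 ∧ z.1 = max u.1 v.1 ∧ z.2 < min u.2 v.2 then -1 else 1

lemma cellSign_swap (u v z : Fin m × Fin n) : cellSign v u z = cellSign u v z := by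
  simp only [cellSign, ne_comm, max_comm, min_comm]

lemma cellSign_left_mul_cellSign_right (u v : Fin m × Fin n) :
    cellSign u v u * cellSign u v v = 1 := by
  unfold cellSign
  grind

/-- The sign `-1` if both edges `uv` and `u'v'` join the same two distinct rows, and `1`
otherwise. -/
def sameRowsSign (u v u' v' : Fin m × Fin n) : ℤ :=
  if u.1 ≠ v.1 ∧ u'.1 ≠ v'.1 ∧ min u.1 v.1 = min u'.1 v'.1 then -1 else 1

lemma sameRowsSign_swap_left (u v u' v' : Fin m × Fin n) :
    sameRowsSign v u u' v' = sameRowsSign u v u' v' := by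
  simp only [sameRowsSign, ne_comm, min_comm]

lemma sameRowsSign_swap_right (u v u' v' : Fin m × Fin n) :
    sameRowsSign u v v' u' = sameRowsSign u v u' v' := by
  simp only [sameRowsSign, ne_comm, min_comm]

lemma sameRowsSign_mul_sameRowsSign (u v u' v' : Fin m × Fin n) :
    sameRowsSign u v u' v' * sameRowsSign u' v' u v = 1 := by
  unfold sameRowsSign
  grind

lemma cellSign_mul_crossingSign {u v u' v' : Fin m × Fin n} (h : (gridGraph m n).Adj u v)
    (h' : (gridGraph m n).Adj u' v') (huu' : u ≠ u') (huv' : u ≠ v') (hvu' : v ≠ u')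
    (hvv' : v ≠ v') :
    cellSign u v u' * cellSign u v v' * crossingSign (toLex u) (toLex v) (toLex u') (toLex v') =
      sameRowsSign u v u' v' := by
  wlog horder : toLex u < toLex v generalizing u v
  · have hvu : toLex v < toLex u := lt_of_le_of_ne (not_lt.1 horder) (by simpa using h.ne')
    have := this h.symm hvu' hvv' huu' huv' hvu
    rwa [cellSign_swap u v, cellSign_swap u v, crossingSign_swap_left,
      sameRowsSign_swap_left] at this
  wlog horder' : toLex u' < toLex v' generalizing u' v'
  · have hvu : toLex v' < toLex u' := lt_of_le_of_ne (not_lt.1 horder') (by simpa using h'.ne')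
    have := this h'.symm huv' huu' hvv' hvu' hvu
    rwa [mul_comm (cellSign _ _ _), crossingSign_swap_right, sameRowsSign_swap_right] at this
  unfold crossingSign cellSign sameRowsSign
  rw [min_eq_left horder.le, max_eq_right horder.le, min_eq_left horder'.le,
    max_eq_right horder'.le]
  replace h := gridGraph_adj_cases_of_toLex_lt h horder
  replace h' := gridGraph_adj_cases_of_toLex_lt h' horder'
  clear horder horder'
  simp only [Prod.Lex.lt_iff, ofLex_toLex, Fin.lt_def, Fin.ext_iff, ne_eq, Prod.ext_iff,
    Fin.coe_max, Fin.coe_min] at *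
  rcases h with ⟨hr, hc⟩ | ⟨hr, hc⟩ <;> rcases h' with ⟨hr', hc'⟩ | ⟨hr', hc'⟩ <;>
    split_ifs <;> first | rfl | omega

lemma prod_cellSign {u v : Fin m × Fin n} (h : (gridGraph m n).Adj u v) :
    ∏ z, cellSign u v z = kasteleynSign u v := by
  by_cases hrow : u.1 = v.1
  · simp [cellSign, kasteleynSign, hrow]
  have hcol : min u.2 v.2 = u.2 := by
    rw [gridGraph_adj_iff] at h
    grind
  have hcell : ∀ z, cellSign u v z =
      if z.1 = max u.1 v.1 then if z.2 < u.2 then -1 else 1 else 1 := by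
    intro z
    simp only [cellSign, hcol]
    grind
  simp only [hcell, Fintype.prod_prod_type, kasteleynSign, if_neg hrow]
  rw [Finset.prod_eq_single (max u.1 v.1)]
  · simp [Finset.prod_ite, Finset.filter_gt_eq_Iio]
  · intro x _ hx
    simp [hx]
  · simp

theorem prod_kasteleynSign_eq_prod_crossingSign {N : ℕ}
    (c : BalancedColoring (gridGraph m n) (Fin N))
    (hc : ∀ i, (gridGraph m n).Adj (c.black i) (c.white i)) :
    (∏ i, kasteleynSign (c.black i) (c.white i)) =
      ∏ i, ∏ j ∈ {i}ᶜ, crossingSign (toLex (c.black i)) (toLex (c.white i)) (toLex (c.black j))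
        (toLex (c.white j)) := by
  have hpair : ∀ i, ∀ j ∈ ({i}ᶜ : Finset (Fin N)),
      cellSign (c.black i) (c.white i) (c.black j) * cellSign (c.black i) (c.white i) (c.white j) =
        sameRowsSign (c.black i) (c.white i) (c.black j) (c.white j) *
        crossingSign (toLex (c.black i)) (toLex (c.white i)) (toLex (c.black j))
          (toLex (c.white j)) := by
    intro i j hj
    have hij : i ≠ j := by simpa [eq_comm] using hj
    rw [← cellSign_mul_crossingSign (hc i) (hc j) (c.black_injective.ne hij) (c.black_ne_white i j)
      (c.black_ne_white j i).symm (c.white_injective.ne hij), mul_assoc, ← sq, crossingSign_sq,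
      mul_one]
  have hsame : ∏ i, ∏ j ∈ {i}ᶜ,
      sameRowsSign (c.black i) (c.white i) (c.black j) (c.white j) = 1 := by
    rw [← Finset.prod_prod_Ioi_mul_eq_prod_prod_off_diag
      fun j i => sameRowsSign (c.black i) (c.white i) (c.black j) (c.white j)]
    exact Finset.prod_eq_one fun i _ => Finset.prod_eq_one fun j _ =>
      sameRowsSign_mul_sameRowsSign _ _ _ _
  calc
    _ = ∏ i, ∏ j ∈ {i}ᶜ, cellSign (c.black i) (c.white i) (c.black j) *
          cellSign (c.black i) (c.white i) (c.white j) := by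
      refine Finset.prod_congr rfl fun i _ => ?_
      rw [← prod_cellSign (hc i), ← c.vertexEquiv.prod_comp, Fintype.prod_sum_type,
        ← Finset.prod_mul_distrib, Fintype.prod_eq_mul_prod_compl i]
      exact (congrArg (· * _) (cellSign_left_mul_cellSign_right _ _)).trans (one_mul _)
    _ = _ := by
      rw [Finset.prod_congr rfl fun i _ => Finset.prod_congr rfl (hpair i)]
      simp only [Finset.prod_mul_distrib, hsame, one_mul]

end GridSigns

section KasteleynMatrix

open Matrix Kronecker

lemma neg_kronecker {R l m n p : Type*} [Ring R] (A : Matrix l m R) (B : Matrix n p R) :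
    (-A) ⊗ₖ B = -(A ⊗ₖ B) := by
  ext
  simp

lemma kronecker_neg {R l m n p : Type*} [Ring R] (A : Matrix l m R) (B : Matrix n p R) :
    A ⊗ₖ (-B) = -(A ⊗ₖ B) := by
  ext
  simp

variable (R : Type*) [CommRing R] (m n : ℕ)

/-- The skew-symmetric adjacency matrix of the path on `n` vertices, oriented upwards. -/
def skewPathMatrix : Matrix (Fin n) (Fin n) R :=
  .of fun x y => if (x : ℕ) + 1 = y then 1 else if (y : ℕ) + 1 = x then -1 else 0

/-- The diagonal matrix with alternating entries `1, -1, 1, …`. -/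
def alternatingMatrix : Matrix (Fin n) (Fin n) R :=
  diagonal fun x => (-1) ^ (x : ℕ)

/-- Kasteleyn's skew-symmetric weighted adjacency matrix of the grid graph. -/
def kasteleynMatrix : Matrix (Fin m × Fin n) (Fin m × Fin n) R :=
  1 ⊗ₖ skewPathMatrix R n + skewPathMatrix R m ⊗ₖ alternatingMatrix R n

lemma kasteleynMatrix_apply (u v : Fin m × Fin n) : kasteleynMatrix R m n u v =
    (if u.1 = v.1 then 1 else 0) * (if (u.2 : ℕ) + 1 = v.2 then 1 else
      if (v.2 : ℕ) + 1 = u.2 then -1 else 0) +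
    (if (u.1 : ℕ) + 1 = v.1 then 1 else if (v.1 : ℕ) + 1 = u.1 then -1 else 0) *
      (if u.2 = v.2 then (-1) ^ (u.2 : ℕ) else 0) := by
  simp [kasteleynMatrix, skewPathMatrix, alternatingMatrix, one_apply, diagonal_apply]

lemma transpose_skewPathMatrix : (skewPathMatrix R n)ᵀ = -skewPathMatrix R n := by
  ext x y
  simp only [skewPathMatrix, transpose_apply, Matrix.neg_apply, of_apply]
  split_ifs <;> first | omega | simp

lemma transpose_kasteleynMatrix : (kasteleynMatrix R m n)ᵀ = -kasteleynMatrix R m n := by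
  rw [kasteleynMatrix, transpose_add, ← kroneckerMap_transpose, ← kroneckerMap_transpose,
    transpose_one, transpose_skewPathMatrix, transpose_skewPathMatrix, alternatingMatrix,
    diagonal_transpose, kronecker_neg, neg_kronecker, neg_add]

variable {R m n} {u v : Fin m × Fin n}

lemma kasteleynMatrix_apply_of_not_adj (h : ¬ (gridGraph m n).Adj u v) :
    kasteleynMatrix R m n u v = 0 := by
  rw [gridGraph_adj_iff] at h
  rw [kasteleynMatrix_apply]
  simp only [Fin.ext_iff]
  split_ifs <;> first | omega | simp

lemma kasteleynMatrix_apply_of_adj (h : (gridGraph m n).Adj u v) :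
    kasteleynMatrix R m n u v =
      ((orderSign (toLex u) (toLex v) * kasteleynSign u v : ℤ) : R) := by
  rw [gridGraph_adj_iff] at h
  rw [kasteleynMatrix_apply]
  simp only [orderSign, kasteleynSign, Prod.Lex.lt_iff, ofLex_toLex, Fin.lt_def, Fin.ext_iff]
  split_ifs <;> first | omega | simp

lemma sign_mul_prod_kasteleynMatrix {N : ℕ} (c : BalancedColoring (gridGraph m n) (Fin N))
    {σ : Equiv.Perm (Fin N)}
    (hσ : ∀ i, (gridGraph m n).Adj (c.black (σ i)) (c.white i)) :
    (σ.sign : R) * ∏ i, kasteleynMatrix R m n (c.black (σ i)) (c.white i) =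
      (colorSign (toLex ∘ c.black) (toLex ∘ c.white) : R) := by
  have hK := prod_kasteleynSign_eq_prod_crossingSign (c.permuteBlack σ) hσ
  have hcross := prod_crossingSign_mul_prod_orderSign
    (b := toLex ∘ c.black ∘ σ) (w := toLex ∘ c.white)
    (toLex.injective.comp (c.black_injective.comp σ.injective))
    (toLex.injective.comp c.white_injective)
    fun i j => toLex.injective.ne (c.black_ne_white (σ i) j)
  have hprod : ∏ i, kasteleynMatrix R m n (c.black (σ i)) (c.white i) =
      ((colorSign (toLex ∘ c.black ∘ σ) (toLex ∘ c.white) : ℤ) : R) := by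
    rw [Finset.prod_congr rfl fun i _ => kasteleynMatrix_apply_of_adj (hσ i), ← hcross,
      ← Int.cast_prod, Finset.prod_mul_distrib, mul_comm]
    exact congrArg Int.cast (congrArg (· * _) hK)
  have hsign : (σ.sign : ℤ) * σ.sign = 1 := congrArg Units.val (Int.units_mul_self σ.sign)
  rw [hprod, ← Function.comp_assoc, colorSign_comp_perm, ← Int.cast_mul, ← mul_assoc,
    hsign, one_mul]

lemma det_kasteleynMatrix_submatrix {N : ℕ} (c : BalancedColoring (gridGraph m n) (Fin N)) :
    ((kasteleynMatrix R m n).submatrix c.black c.white).det =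
      (colorSign (toLex ∘ c.black) (toLex ∘ c.white) : R) *
        numPerfectMatchings (gridGraph m n) := by
  classical
  rw [c.numPerfectMatchings_eq_card_perm, Nat.card_eq_fintype_card, Fintype.card_subtype,
    det_apply']
  have hterm : ∀ σ : Equiv.Perm (Fin N),
      (σ.sign : R) * ∏ i, kasteleynMatrix R m n (c.black (σ i)) (c.white i) =
        if ∀ i, (gridGraph m n).Adj (c.black (σ i)) (c.white i) then
          (colorSign (toLex ∘ c.black) (toLex ∘ c.white) : R) else 0 := by
    intro σ
    split_ifs with hσ
    · exact sign_mul_prod_kasteleynMatrix c hσ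
    · obtain ⟨i, hi⟩ := not_forall.1 hσ
      rw [Finset.prod_eq_zero (Finset.mem_univ i) (kasteleynMatrix_apply_of_not_adj hi), mul_zero]
  simp only [submatrix_apply, hterm, ← Finset.sum_filter, Finset.sum_const, nsmul_eq_mul]
  rw [mul_comm]

lemma det_mul_self_fromBlocks_zero_neg_transpose {ι : Type*} [Fintype ι] [DecidableEq ι]
    (B : Matrix ι ι R) :
    (fromBlocks 0 B (-Bᵀ) 0 * fromBlocks 0 B (-Bᵀ) 0).det = B.det ^ 4 := by
  rw [fromBlocks_multiply]
  simp only [zero_mul, mul_zero, add_zero, zero_add, det_fromBlocks_zero₂₁, det_mul, det_neg,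
    det_transpose]
  have hsign : ((-1 : R) ^ Fintype.card ι) ^ 2 = 1 := by
    rw [← pow_mul, mul_comm, pow_mul, neg_one_sq, one_pow]
  linear_combination B.det ^ 4 * hsign

lemma det_kasteleynMatrix_mul_self_of_coloring {N : ℕ}
    (c : BalancedColoring (gridGraph m n) (Fin N)) :
    (kasteleynMatrix R m n * kasteleynMatrix R m n).det =
      (numPerfectMatchings (gridGraph m n) : R) ^ 4 := by
  set K := kasteleynMatrix R m n
  have hblocks : K.submatrix c.vertexEquiv c.vertexEquiv =
      fromBlocks 0 (K.submatrix c.black c.white) (-(K.submatrix c.black c.white)ᵀ) 0 := by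
    ext (i | i) (j | j)
    · exact kasteleynMatrix_apply_of_not_adj (c.not_adj_inl i j)
    · rfl
    · exact congrFun (congrFun (transpose_kasteleynMatrix R m n) (c.black j)) (c.white i)
    · exact kasteleynMatrix_apply_of_not_adj (c.not_adj_inr i j)
  have hsign : (colorSign (toLex ∘ c.black) (toLex ∘ c.white) : R) ^ 2 = 1 := by
    exact_mod_cast congrArg (Int.cast (R := R)) <| colorSign_sq
      (toLex.injective.comp c.black_injective) (toLex.injective.comp c.white_injective)
      fun i j => toLex.injective.ne (c.black_ne_white i j)
  rw [← det_submatrix_equiv_self c.vertexEquiv, ← submatrix_mul_equiv K K _ c.vertexEquiv, hblocks,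
    det_mul_self_fromBlocks_zero_neg_transpose, det_kasteleynMatrix_submatrix, mul_pow,
    pow_mul _ 2 2, hsign, one_pow, one_mul]

/-- The chessboard colouring of a grid with an even number of columns: the reversal of the columns
exchanges the colours. -/
def gridColoring (hn : Even n) :
    BalancedColoring (gridGraph m n) {v : Fin m × Fin n // Even ((v.1 : ℕ) + v.2)} :=
  .ofInvolutive (fun v : Fin m × Fin n => Even ((v.1 : ℕ) + v.2)) (f := Prod.map id Fin.rev)
    (fun v => by simp only [Prod.map_apply', id_eq, Fin.rev_rev])
    (fun v => by
      simp only [Prod.map_fst, Prod.map_snd, id_eq, Fin.val_rev, Nat.even_iff] at hn ⊢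
      omega)
    fun u v h => by
      rw [gridGraph_adj_iff] at h
      simp only [Nat.even_iff]
      omega

theorem det_kasteleynMatrix_mul_self (hn : Even n) :
    (kasteleynMatrix R m n * kasteleynMatrix R m n).det =
      (numPerfectMatchings (gridGraph m n) : R) ^ 4 :=
  det_kasteleynMatrix_mul_self_of_coloring ((gridColoring hn).reindex (Fintype.equivFin _).symm)

lemma alternatingMatrix_mul_self : alternatingMatrix R n * alternatingMatrix R n = 1 := by
  simp [alternatingMatrix, diagonal_mul_diagonal, ← mul_pow]

lemma skewPathMatrix_mul_alternatingMatrix :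
    skewPathMatrix R n * alternatingMatrix R n =
      -(alternatingMatrix R n * skewPathMatrix R n) := by
  ext x y
  simp only [alternatingMatrix, skewPathMatrix, Matrix.neg_apply, mul_diagonal, diagonal_mul,
    of_apply]
  split_ifs with hxy hyx
  · rw [← hxy, pow_succ]
    ring
  · rw [← hyx, pow_succ]
    ring
  · ring

lemma kasteleynMatrix_mul_self :
    kasteleynMatrix R m n * kasteleynMatrix R m n =
      1 ⊗ₖ (skewPathMatrix R n * skewPathMatrix R n) +
        (skewPathMatrix R m * skewPathMatrix R m) ⊗ₖ 1 := by
  simp only [kasteleynMatrix, add_mul, mul_add, ← mul_kronecker_mul, one_mul, mul_one,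
    alternatingMatrix_mul_self, skewPathMatrix_mul_alternatingMatrix, kronecker_neg]
  abel

end KasteleynMatrix

section Spectrum

open Matrix Kronecker

lemma det_ne_zero_of_mul_eq_mul_diagonal {K ι : Type*} [Field K] [Fintype ι] [DecidableEq ι]
    {A P : Matrix ι ι K} {μ : ι → K} (hμ : Function.Injective μ) (hP : ∀ k, P.col k ≠ 0)
    (h : A * P = P * diagonal μ) : P.det ≠ 0 := by
  have heigen : ∀ k, Module.End.HasEigenvector A.toLin' (μ k) (P.col k) := by
    refine fun k => ⟨Module.End.mem_eigenspace_iff.2 (funext fun x => ?_), hP k⟩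
    have hxk := congrFun (congrFun h x) k
    rwa [mul_diagonal, mul_comm (P x k)] at hxk
  have hind := Module.End.eigenvectors_linearIndependent' A.toLin' μ hμ P.col heigen
  exact ((isUnit_iff_isUnit_det P).1 (linearIndependent_cols_iff_isUnit.1 hind)).ne_zero

lemma mul_self_mul_eq_mul_diagonal {R ι : Type*} [CommSemiring R] [Fintype ι] [DecidableEq ι]
    {A P : Matrix ι ι R} {μ : ι → R} (h : A * P = P * diagonal μ) :
    A * A * P = P * diagonal fun k => μ k ^ 2 := by
  simp only [Matrix.mul_assoc, h, sq, ← diagonal_mul_diagonal]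
  rw [← Matrix.mul_assoc, h, Matrix.mul_assoc]

lemma det_one_kronecker_add_kronecker_one {R ι κ : Type*} [CommRing R] [IsDomain R] [Fintype ι]
    [DecidableEq ι] [Fintype κ] [DecidableEq κ] {A P : Matrix ι ι R} {B S : Matrix κ κ R}
    {μ : ι → R} {ν : κ → R} (hA : A * P = P * diagonal μ) (hB : B * S = S * diagonal ν)
    (hP : P.det ≠ 0) (hS : S.det ≠ 0) :
    (1 ⊗ₖ B + A ⊗ₖ 1).det = ∏ i, ∏ k, (μ i + ν k) := by
  have hdiag : (1 ⊗ₖ B + A ⊗ₖ 1) * (P ⊗ₖ S) =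
      (P ⊗ₖ S) * diagonal fun p : ι × κ => μ p.1 + ν p.2 := by
    rw [add_mul, ← mul_kronecker_mul, ← mul_kronecker_mul, hA, hB, one_mul, one_mul]
    ext p q
    simp only [Matrix.add_apply, kroneckerMap_apply, mul_diagonal]
    ring
  have hPS : (P ⊗ₖ S).det ≠ 0 := by
    rw [det_kronecker]
    exact mul_ne_zero (pow_ne_zero _ hP) (pow_ne_zero _ hS)
  rw [← Fintype.prod_prod_type', ← det_diagonal]
  refine mul_right_cancel₀ hPS ?_
  rw [← det_mul, hdiag, det_mul, mul_comm]

lemma sum_skewPathMatrix_mul {R : Type*} [CommRing R] {n : ℕ} {f : ℕ → R} (h0 : f 0 = 0)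
    (hn : f (n + 1) = 0) (x : Fin n) :
    ∑ y, skewPathMatrix R n x y * f (y + 1) = f (x + 2) - f x := by
  have hterm : ∀ y : Fin n, skewPathMatrix R n x y * f (y + 1) =
      (if (x : ℕ) + 1 = y then f (y + 1) else 0) - if (y : ℕ) + 1 = x then f (y + 1) else 0 := by
    intro y
    simp only [skewPathMatrix, of_apply]
    split_ifs <;> first | omega | simp
  have hupper : ∑ y ∈ Finset.range n, (if (x : ℕ) + 1 = y then f (y + 1) else 0) = f (x + 2) := by
    rw [Finset.sum_ite_eq, ite_eq_left_iff, Finset.mem_range]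
    intro hx
    rw [show (x : ℕ) + 2 = n + 1 by omega, hn]
  have hlower : ∑ y ∈ Finset.range n, (if y + 1 = (x : ℕ) then f (y + 1) else 0) = f x := by
    obtain ⟨_ | x, hx⟩ := x
    · simp [h0]
    · simp only [Nat.add_right_cancel_iff]
      rw [Finset.sum_ite_eq', if_pos (Finset.mem_range.2 (by omega))]
  simp only [hterm, Finset.sum_sub_distrib]
  rw [Fin.sum_univ_eq_sum_range fun y => if (x : ℕ) + 1 = y then f (y + 1) else 0, hupper,
    Fin.sum_univ_eq_sum_range fun y => if y + 1 = (x : ℕ) then f (y + 1) else 0, hlower]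

/-- The angle `(k + 1) π / (n + 1)`, for `k < n`, whose cosine gives the `k`-th eigenvalue of a path
on `n` vertices. -/
noncomputable def pathAngle (n k : ℕ) : ℝ := (k + 1) * Real.pi / (n + 1)

variable {n : ℕ}

lemma pathAngle_mem_Ioo {k : ℕ} (hk : k < n) : pathAngle n k ∈ Set.Ioo 0 Real.pi := by
  have hk' : (k : ℝ) + 1 < n + 1 := by exact_mod_cast Nat.succ_lt_succ hk
  refine ⟨by unfold pathAngle; positivity, ?_⟩
  rw [pathAngle, div_lt_iff₀ (by positivity), mul_comm]
  gcongr

lemma strictMono_pathAngle (n : ℕ) : StrictMono (pathAngle n) := by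
  intro k l hkl
  unfold pathAngle
  gcongr

lemma cos_pathAngle_injOn : Set.InjOn (fun k => Real.cos (pathAngle n k)) (Set.Iio n) :=
  Real.injOn_cos.comp (strictMono_pathAngle n).injective.injOn fun _ hk =>
    Set.Ioo_subset_Icc_self (pathAngle_mem_Ioo hk)

/-- The matrix whose `k`-th column is the eigenvector `y ↦ I ^ y * sin (y θ)`, `1 ≤ y ≤ n`, of
`skewPathMatrix ℂ n` at the angle `θ = pathAngle n k`. -/
noncomputable def pathEigenvectors (n : ℕ) : Matrix (Fin n) (Fin n) ℂ :=
  .of fun x k => Complex.I ^ (x + 1 : ℕ) * Complex.sin ((x + 1 : ℕ) * pathAngle n k)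

/-- The `k`-th eigenvalue of `skewPathMatrix ℂ n`. -/
noncomputable def pathEigenvalue (n : ℕ) (k : Fin n) : ℂ :=
  2 * Complex.I * Complex.cos (pathAngle n k)

lemma skewPathMatrix_mul_pathEigenvectors (n : ℕ) :
    skewPathMatrix ℂ n * pathEigenvectors n = pathEigenvectors n * diagonal (pathEigenvalue n) := by
  ext x k
  have hend : ((n + 1 : ℕ) : ℂ) * pathAngle n k = (k + 1 : ℕ) * Real.pi := by
    have hn : (n : ℂ) + 1 ≠ 0 := by exact_mod_cast n.succ_ne_zero
    rw [pathAngle]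
    push_cast
    field_simp
  have hsum := sum_skewPathMatrix_mul
    (f := fun y => Complex.I ^ y * Complex.sin (y * pathAngle n k)) (by simp)
    (by rw [hend, Complex.sin_nat_mul_pi, mul_zero]) x
  have hupper : ((x + 2 : ℕ) : ℂ) * pathAngle n k =
      (x + 1 : ℕ) * pathAngle n k + pathAngle n k := by
    push_cast
    ring
  have hlower : (x : ℂ) * pathAngle n k = (x + 1 : ℕ) * pathAngle n k - pathAngle n k := by
    push_cast
    ring
  rw [mul_diagonal, mul_apply]
  refine hsum.trans ?_
  simp only [hupper, hlower, pathEigenvectors, pathEigenvalue, of_apply, Complex.sin_add,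
    Complex.sin_sub]
  linear_combination Complex.I ^ (x : ℕ) *
    (Complex.cos ((x + 1 : ℕ) * pathAngle n k) * Complex.sin (pathAngle n k) -
      Complex.sin ((x + 1 : ℕ) * pathAngle n k) * Complex.cos (pathAngle n k)) * Complex.I_sq

lemma pathEigenvalue_injective (n : ℕ) : Function.Injective (pathEigenvalue n) := by
  intro k l h
  have hcos := mul_left_cancel₀ (mul_ne_zero two_ne_zero Complex.I_ne_zero) h
  exact Fin.ext (cos_pathAngle_injOn k.2 l.2 (by exact_mod_cast hcos))

lemma det_pathEigenvectors_ne_zero (n : ℕ) : (pathEigenvectors n).det ≠ 0 := by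
  refine det_ne_zero_of_mul_eq_mul_diagonal (pathEigenvalue_injective n) (fun k hk => ?_)
    (skewPathMatrix_mul_pathEigenvectors n)
  have hfirst := congrFun hk ⟨0, k.pos⟩
  have hsin : Real.sin (pathAngle n k) ≠ 0 :=
    (Real.sin_pos_of_mem_Ioo (pathAngle_mem_Ioo k.2)).ne'
  simp [pathEigenvectors, ← Complex.ofReal_sin, hsin] at hfirst

theorem numPerfectMatchings_gridGraph_pow_four {m : ℕ} (hn : Even n) :
    (numPerfectMatchings (gridGraph m n) : ℝ) ^ 4 =
      ∏ j : Fin m, ∏ k : Fin n,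
        (4 * Real.cos (pathAngle m j) ^ 2 + 4 * Real.cos (pathAngle n k) ^ 2) := by
  have hdet := det_one_kronecker_add_kronecker_one
    (mul_self_mul_eq_mul_diagonal (skewPathMatrix_mul_pathEigenvectors m))
    (mul_self_mul_eq_mul_diagonal (skewPathMatrix_mul_pathEigenvectors n))
    (det_pathEigenvectors_ne_zero m) (det_pathEigenvectors_ne_zero n)
  have hfactor : ∀ (j : Fin m) (k : Fin n), pathEigenvalue m j ^ 2 + pathEigenvalue n k ^ 2 =
      -((4 * Real.cos (pathAngle m j) ^ 2 + 4 * Real.cos (pathAngle n k) ^ 2 : ℝ) : ℂ) := by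
    intro j k
    simp only [pathEigenvalue, mul_pow, Complex.I_sq]
    push_cast
    ring
  rw [← kasteleynMatrix_mul_self, det_kasteleynMatrix_mul_self hn] at hdet
  simp only [hfactor, Finset.prod_neg, Finset.card_univ, Fintype.card_fin, hn.neg_one_pow,
    one_mul] at hdet
  exact_mod_cast hdet

end Spectrum

section Chebyshev

open Polynomial

lemma chebyshev_U_real_eq_prod (n : ℕ) :
    Chebyshev.U ℝ n = C (2 ^ n) * ∏ k ∈ Finset.range n, (X - C (Real.cos (pathAngle n k))) := by
  have hinj : Set.InjOn (fun k => Real.cos (pathAngle n k)) (Finset.range n) := by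
    rw [Finset.coe_range]
    exact cos_pathAngle_injOn
  have hroots : (Chebyshev.U ℝ n).roots =
      ((Finset.range n).image fun k => Real.cos (pathAngle n k)).val :=
    Chebyshev.roots_U_real n
  have hcard : (Chebyshev.U ℝ n).roots.card = (Chebyshev.U ℝ n).natDegree := by
    rw [hroots, Chebyshev.natDegree_U_natCast, Finset.card_val, Finset.card_image_of_injOn hinj,
      Finset.card_range]
  rw [← C_leadingCoeff_mul_prod_multiset_X_sub_C hcard, Chebyshev.leadingCoeff_U_natCast, hroots,
    ← Finset.prod_image (f := fun x => X - C x) hinj]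
  rfl

lemma eval_chebyshev_U_complex (n : ℕ) (z : ℂ) :
    (Chebyshev.U ℂ n).eval z =
      ∏ k ∈ Finset.range n, (2 * (z - (Real.cos (pathAngle n k) : ℂ))) := by
  rw [← Chebyshev.map_U (algebraMap ℝ ℂ), chebyshev_U_real_eq_prod, Finset.prod_mul_distrib]
  simp [Polynomial.map_prod, eval_prod]

lemma eval_chebyshev_U_sinh_mul_I (p : ℕ) (a : ℂ) :
    (Chebyshev.U ℂ (2 * p : ℕ)).eval (Complex.sinh a * Complex.I) * Complex.cosh a =
      (-1) ^ p * Complex.cosh ((2 * p + 1) * a) := by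
  have hcos := Chebyshev.U_complex_cos (Real.pi / 2 - a * Complex.I) (2 * p : ℕ)
  have hangle : (((2 * p : ℕ) : ℤ) + 1 : ℂ) * (Real.pi / 2 - a * Complex.I) =
      Real.pi / 2 - ((2 * p + 1) * a * Complex.I - p * Real.pi) := by
    push_cast
    ring
  rwa [Complex.cos_pi_div_two_sub, Complex.sin_mul_I, hangle, Complex.sin_pi_div_two_sub,
    Complex.sin_pi_div_two_sub, Complex.cos_mul_I, Complex.cos_antiperiodic.sub_nat_mul_eq p,
    Complex.cos_mul_I] at hcos

lemma prod_sinh_sq_add_cos_pathAngle_sq_eq_normSq (n : ℕ) (a : ℝ) :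
    ∏ k : Fin n, (4 * Real.sinh a ^ 2 + 4 * Real.cos (pathAngle n k) ^ 2) =
      Complex.normSq ((Chebyshev.U ℂ n).eval (Complex.sinh a * Complex.I)) := by
  rw [eval_chebyshev_U_complex, map_prod,
    Fin.prod_univ_eq_prod_range fun k => 4 * Real.sinh a ^ 2 + 4 * Real.cos (pathAngle n k) ^ 2]
  refine Finset.prod_congr rfl fun k _ => ?_
  have hfactor : 2 * (Complex.sinh a * Complex.I - (Real.cos (pathAngle n k) : ℂ)) =
      (-2 * Real.cos (pathAngle n k) : ℝ) + (2 * Real.sinh a : ℝ) * Complex.I := by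
    push_cast
    ring
  rw [hfactor, Complex.normSq_add_mul_I]
  ring

lemma prod_sinh_sq_add_cos_pathAngle_sq {n : ℕ} (hn : Even n) (a : ℝ) :
    ∏ k : Fin n, (4 * Real.sinh a ^ 2 + 4 * Real.cos (pathAngle n k) ^ 2) =
      (Real.cosh ((n + 1) * a) / Real.cosh a) ^ 2 := by
  obtain ⟨p, rfl⟩ := hn.exists_two_nsmul
  have hnormSq := congrArg Complex.normSq (eval_chebyshev_U_sinh_mul_I p a)
  have hcast : (2 * p + 1 : ℂ) * a = ((2 * p + 1) * a : ℝ) := by push_cast; rfl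
  rw [hcast, ← Complex.ofReal_cosh, ← Complex.ofReal_cosh, map_mul, map_mul, map_pow,
    Complex.normSq_ofReal, Complex.normSq_ofReal, Complex.normSq_neg, map_one, one_pow,
    one_mul] at hnormSq
  have hcosh := (Real.cosh_pos a).ne'
  rw [smul_eq_mul, prod_sinh_sq_add_cos_pathAngle_sq_eq_normSq, div_pow,
    eq_div_iff (pow_ne_zero 2 hcosh), sq, hnormSq]
  push_cast
  ring

end Chebyshev

section RiemannSum

variable {E : Type*} [NormedAddCommGroup E] [NormedSpace ℝ E] [CompleteSpace E]
  {f : ℝ → E} {K : NNReal}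

lemma norm_integral_sub_smul_le_of_lipschitzWith (hf : LipschitzWith K f) (a h : ℝ) :
    ‖(∫ t in a..a + h, f t) - h • f a‖ ≤ K * h ^ 2 := by
  have hint : h • f a = ∫ _ in a..a + h, f a := by simp
  rw [hint, ← intervalIntegral.integral_sub (hf.continuous.intervalIntegrable _ _) (by simp)]
  have hbound : ∀ t ∈ Set.uIoc a (a + h), ‖f t - f a‖ ≤ K * |h| := by
    intro t ht
    refine (hf.norm_sub_le t a).trans ?_
    gcongr
    simpa using Set.abs_sub_left_of_mem_uIcc (Set.uIoc_subset_uIcc ht)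
  refine (intervalIntegral.norm_integral_le_of_norm_le_const hbound).trans_eq ?_
  rw [add_sub_cancel_left, mul_assoc, abs_mul_abs_self, sq]

lemma norm_integral_sub_riemannSum_le_of_lipschitzWith (hf : LipschitzWith K f) (h : ℝ) (N : ℕ) :
    ‖(∫ t in 0..N * h, f t) - h • ∑ k ∈ Finset.range N, f (k * h)‖ ≤ N * (K * h ^ 2) := by
  have hsplit : ∫ t in 0..N * h, f t = ∑ k ∈ Finset.range N, ∫ t in k * h..k * h + h, f t := by
    have hadj := intervalIntegral.sum_integral_adjacent_intervals (a := fun k : ℕ => k * h)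
      (n := N) fun k _ => hf.continuous.intervalIntegrable (μ := MeasureTheory.volume) _ _
    simpa [add_one_mul] using hadj.symm
  rw [hsplit, Finset.smul_sum, ← Finset.sum_sub_distrib]
  refine (norm_sum_le_of_le _ fun (k : ℕ) _ =>
    norm_integral_sub_smul_le_of_lipschitzWith hf (k * h) h).trans_eq ?_
  simp

lemma abs_sum_pathAngle_sub_integral_le {g : ℝ → ℝ} (hg : LipschitzWith K g) (m : ℕ) :
    |∑ j : Fin m, g (pathAngle m j) - (m + 1) / Real.pi * ∫ t in 0..Real.pi, g t| ≤
      K * Real.pi + |g 0| := by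
  set h : ℝ := Real.pi / (m + 1) with hh
  have hpos : 0 < h := by positivity
  have hend : (m + 1) * h = Real.pi := by rw [hh]; field_simp
  have hriemann := norm_integral_sub_riemannSum_le_of_lipschitzWith hg h (m + 1)
  have hsum : ∑ k ∈ Finset.range (m + 1), g (k * h) = ∑ j : Fin m, g (pathAngle m j) + g 0 := by
    rw [Finset.sum_range_succ', Fin.sum_univ_eq_sum_range fun j => g (pathAngle m j)]
    simp [pathAngle, hh, mul_div_assoc]
  rw [hsum, smul_eq_mul, Nat.cast_add_one, hend, Real.norm_eq_abs] at hriemann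
  set S := ∑ j : Fin m, g (pathAngle m j)
  set I := ∫ t in 0..Real.pi, g t
  have hscale : S - (m + 1) / Real.pi * I = -(h⁻¹ * (I - h * (S + g 0))) - g 0 := by
    rw [hh]
    field_simp
    ring
  calc |S - (m + 1) / Real.pi * I|
    _ ≤ h⁻¹ * |I - h * (S + g 0)| + |g 0| := by
      rw [hscale, ← abs_of_pos (inv_pos.2 hpos), ← abs_mul, ← abs_neg (_ * _),
        abs_of_pos (inv_pos.2 hpos)]
      exact abs_sub _ _
    _ ≤ h⁻¹ * ((m + 1) * (K * h ^ 2)) + |g 0| := by gcongr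
    _ = K * Real.pi + |g 0| := by
      rw [← hend]
      field_simp

end RiemannSum

section CatalanIntegral

open MeasureTheory

/-- The function `t ↦ arsinh |cos t|`, whose value at the `j`-th angle of a path on `m` vertices is
the exponential growth rate in `n` of the `j`-th factor of the number of tilings. -/
noncomputable def arsinhAbsCos (t : ℝ) : ℝ := Real.arsinh |Real.cos t|

lemma lipschitzWith_arsinh : LipschitzWith 1 Real.arsinh := by
  refine lipschitzWith_of_nnnorm_deriv_le Real.differentiable_arsinh fun x => ?_
  rw [(Real.hasDerivAt_arsinh x).deriv, ← NNReal.coe_le_coe, coe_nnnorm, Real.norm_eq_abs,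
    abs_of_nonneg (by positivity), NNReal.coe_one]
  refine inv_le_one_of_one_le₀ (Real.one_le_sqrt.2 ?_)
  linarith [sq_nonneg x]

lemma lipschitzWith_arsinhAbsCos : LipschitzWith 1 arsinhAbsCos := by
  have hcomp := lipschitzWith_arsinh.comp (lipschitzWith_one_norm.comp Real.lipschitzWith_cos)
  rwa [one_mul, one_mul] at hcomp

lemma arsinhAbsCos_nonneg (t : ℝ) : 0 ≤ arsinhAbsCos t :=
  Real.arsinh_nonneg_iff.2 (abs_nonneg _)

lemma arsinhAbsCos_zero_le_one : arsinhAbsCos 0 ≤ 1 := by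
  have h := Real.arsinh_le_arsinh.2 (Real.self_le_sinh_iff.2 zero_le_one)
  simpa [arsinhAbsCos] using h

lemma integral_div_sqrt_one_add_mul_sq (c : ℝ) :
    ∫ a in 0..1, c / √(1 + a ^ 2 * c ^ 2) = Real.arsinh c := by
  have hderiv : ∀ a ∈ Set.uIcc (0 : ℝ) 1,
      HasDerivAt (fun a => Real.arsinh (a * c)) (c / √(1 + a ^ 2 * c ^ 2)) a := fun a _ => by
    simpa [mul_pow, div_eq_inv_mul] using ((hasDerivAt_id a).mul_const c).arsinh
  have hne : ∀ a : ℝ, √(1 + a ^ 2 * c ^ 2) ≠ 0 := fun a => by positivity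
  have hcont : Continuous fun a : ℝ => c / √(1 + a ^ 2 * c ^ 2) := by
    fun_prop (disch := assumption)
  rw [intervalIntegral.integral_eq_sub_of_hasDerivAt hderiv (hcont.intervalIntegrable _ _)]
  simp

lemma hasDerivAt_arcsin_mul_sin_div {a : ℝ} (ha : a ≠ 0) (t : ℝ) :
    HasDerivAt (fun t => Real.arcsin (a * Real.sin t / √(1 + a ^ 2)) / a)
      (Real.cos t / √(1 + a ^ 2 * Real.cos t ^ 2)) t := by
  have hsqrt : √(1 + a ^ 2) ^ 2 = 1 + a ^ 2 := Real.sq_sqrt (by positivity)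
  have hcompl : 1 - (a * Real.sin t / √(1 + a ^ 2)) ^ 2 =
      (1 + a ^ 2 * Real.cos t ^ 2) / (1 + a ^ 2) := by
    rw [div_pow, hsqrt, Real.cos_sq']
    field_simp
    ring
  have hlt : |a * Real.sin t / √(1 + a ^ 2)| < 1 := by
    rw [← sq_lt_one_iff_abs_lt_one, ← sub_pos, hcompl]
    positivity
  have hinner := ((Real.hasDerivAt_sin t).const_mul a).div_const √(1 + a ^ 2)
  refine (((Real.hasDerivAt_arcsin (abs_lt.1 hlt).1.ne' (abs_lt.1 hlt).2.ne).comp t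
    hinner).div_const a).congr_deriv ?_
  rw [hcompl, Real.sqrt_div (by positivity)]
  field_simp

lemma integral_cos_div_sqrt {a : ℝ} (ha : a ≠ 0) :
    ∫ t in 0..Real.pi / 2, Real.cos t / √(1 + a ^ 2 * Real.cos t ^ 2) = Real.arctan a / a := by
  have hne : ∀ t : ℝ, √(1 + a ^ 2 * Real.cos t ^ 2) ≠ 0 := fun t => by positivity
  have hcont : Continuous fun t => Real.cos t / √(1 + a ^ 2 * Real.cos t ^ 2) := by
    fun_prop (disch := assumption)
  rw [intervalIntegral.integral_eq_sub_of_hasDerivAt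
    (fun t _ => hasDerivAt_arcsin_mul_sin_div ha t) (hcont.intervalIntegrable _ _)]
  simp [Real.arctan_eq_arcsin]

lemma summable_one_div_odd_sq : Summable fun k : ℕ => 1 / (2 * (k : ℝ) + 1) ^ 2 := by
  have hsq : Summable fun k : ℕ => 1 / (k : ℝ) ^ 2 :=
    Real.summable_one_div_nat_pow.2 one_lt_two
  have hodd := hsq.comp_injective (i := fun k : ℕ => 2 * k + 1) fun a b h => by simpa using h
  exact hodd.congr fun k => by simp

lemma setIntegral_Ioo_div_mul_pow (k : ℕ) (c : ℝ) :
    ∫ a in Set.Ioo (0 : ℝ) 1, c / (2 * k + 1) * a ^ (2 * k) = c / (2 * k + 1) ^ 2 := by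
  rw [← integral_Ioc_eq_integral_Ioo, ← intervalIntegral.integral_of_le zero_le_one,
    intervalIntegral.integral_const_mul, integral_pow, one_pow, zero_pow (by omega), sub_zero,
    Nat.cast_mul, Nat.cast_ofNat, div_mul_div_comm, mul_one, sq]

lemma hasSum_arctan_div {a : ℝ} (ha : a ∈ Set.Ioo 0 1) :
    HasSum (fun k : ℕ => (-1) ^ k / (2 * k + 1) * a ^ (2 * k)) (Real.arctan a / a) := by
  have hnorm : ‖a‖ < 1 := (Real.norm_of_nonneg ha.1.le).trans_lt ha.2
  refine ((Real.hasSum_arctan hnorm).div_const a).congr_fun fun k => ?_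
  have hne := ha.1.ne'
  push_cast
  field_simp
  ring

lemma integral_arctan_div : ∫ a in 0..1, Real.arctan a / a = catalanConstant := by
  set term : ℕ → ℝ → ℝ := fun k a => (-1) ^ k / (2 * k + 1) * a ^ (2 * k) with hterm
  have hintegrable : ∀ k, Integrable (term k) (volume.restrict (Set.Ioo 0 1)) := fun k =>
    ((by fun_prop : Continuous (term k)).integrableOn_Icc).mono_set Set.Ioo_subset_Icc_self
  have hnorm : ∀ k, ∫ a in Set.Ioo 0 1, ‖term k a‖ = 1 / (2 * k + 1) ^ 2 := by
    intro k
    rw [← setIntegral_Ioo_div_mul_pow]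
    refine setIntegral_congr_fun measurableSet_Ioo fun a ha => ?_
    have hk : (0 : ℝ) ≤ 2 * k + 1 := by positivity
    simp only [hterm, norm_mul, norm_div, norm_pow, norm_neg, norm_one, one_pow,
      Real.norm_of_nonneg hk, Real.norm_of_nonneg ha.1.le]
  rw [intervalIntegral.integral_of_le zero_le_one, integral_Ioc_eq_integral_Ioo]
  calc ∫ a in Set.Ioo 0 1, Real.arctan a / a
    _ = ∫ a in Set.Ioo 0 1, ∑' k, term k a :=
      setIntegral_congr_fun measurableSet_Ioo fun a ha => (hasSum_arctan_div ha).tsum_eq.symm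
    _ = ∑' k, ∫ a in Set.Ioo 0 1, term k a :=
      (integral_tsum_of_summable_integral_norm hintegrable
        (by simpa only [hnorm] using summable_one_div_odd_sq)).symm
    _ = catalanConstant := tsum_congr fun k => setIntegral_Ioo_div_mul_pow k _

lemma integral_arsinhAbsCos_zero_pi_div_two :
    ∫ t in 0..Real.pi / 2, arsinhAbsCos t = catalanConstant := by
  have hne : ∀ p : ℝ × ℝ, √(1 + p.2 ^ 2 * Real.cos p.1 ^ 2) ≠ 0 := fun p => by positivity
  have hcont : Continuous fun p : ℝ × ℝ => Real.cos p.1 / √(1 + p.2 ^ 2 * Real.cos p.1 ^ 2) := by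
    fun_prop (disch := assumption)
  calc ∫ t in 0..Real.pi / 2, arsinhAbsCos t
    _ = ∫ t in 0..Real.pi / 2, ∫ a in 0..1, Real.cos t / √(1 + a ^ 2 * Real.cos t ^ 2) := by
      refine intervalIntegral.integral_congr fun t ht => ?_
      rw [Set.uIcc_of_le (by positivity)] at ht
      have hcos := Real.cos_nonneg_of_mem_Icc ⟨by linarith [ht.1, Real.pi_pos], ht.2⟩
      simp only [integral_div_sqrt_one_add_mul_sq, arsinhAbsCos, abs_of_nonneg hcos]
    _ = ∫ a in 0..1, ∫ t in 0..Real.pi / 2, Real.cos t / √(1 + a ^ 2 * Real.cos t ^ 2) :=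
      intervalIntegral_intervalIntegral_swap <|
        (hcont.continuousOn.integrableOn_compact (isCompact_uIcc.prod isCompact_uIcc)).mono_set
          (Set.prod_mono Set.uIoc_subset_uIcc Set.uIoc_subset_uIcc)
    _ = ∫ a in 0..1, Real.arctan a / a := by
      refine intervalIntegral.integral_congr_ae (.of_forall fun a ha => ?_)
      rw [Set.uIoc_of_le zero_le_one] at ha
      exact integral_cos_div_sqrt ha.1.ne'
    _ = catalanConstant := integral_arctan_div

lemma integral_arsinhAbsCos_zero_pi :
    ∫ t in 0..Real.pi, arsinhAbsCos t = 2 * catalanConstant := by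
  have hint : ∀ a b, IntervalIntegrable arsinhAbsCos volume a b :=
    lipschitzWith_arsinhAbsCos.continuous.intervalIntegrable
  have hreflect : ∫ t in Real.pi / 2..Real.pi, arsinhAbsCos t =
      ∫ t in 0..Real.pi / 2, arsinhAbsCos t := by
    have hsubst :=
      intervalIntegral.integral_comp_sub_left arsinhAbsCos Real.pi (a := 0) (b := Real.pi / 2)
    rw [sub_zero, sub_half] at hsubst
    rw [← hsubst]
    simp [arsinhAbsCos]
  rw [← intervalIntegral.integral_add_adjacent_intervals (hint 0 (Real.pi / 2)) (hint _ _),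
    hreflect, integral_arsinhAbsCos_zero_pi_div_two, two_mul]

end CatalanIntegral

section Asymptotics

lemma log_cosh_mem_Icc {t : ℝ} (ht : 0 ≤ t) :
    Real.log (Real.cosh t) ∈ Set.Icc (t - Real.log 2) t := by
  have hlower : Real.exp t / 2 ≤ Real.cosh t := by
    rw [Real.cosh_eq]
    linarith [Real.exp_pos (-t)]
  have hupper : Real.cosh t ≤ Real.exp t := by
    rw [Real.cosh_eq]
    linarith [Real.exp_le_exp.2 (neg_le_self ht)]
  constructor
  · rw [Real.le_log_iff_exp_le (Real.cosh_pos t), Real.exp_sub, Real.exp_log two_pos]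
    exact hlower
  · exact (Real.log_le_iff_le_exp (Real.cosh_pos t)).2 hupper

lemma abs_log_cosh_div_cosh_sub_le {a b : ℝ} (ha : 0 ≤ a) (hb : 0 ≤ b) :
    |Real.log (Real.cosh b / Real.cosh a) - (b - a)| ≤ Real.log 2 := by
  obtain ⟨ha₁, ha₂⟩ := log_cosh_mem_Icc ha
  obtain ⟨hb₁, hb₂⟩ := log_cosh_mem_Icc hb
  rw [Real.log_div (Real.cosh_pos b).ne' (Real.cosh_pos a).ne', abs_le]
  constructor <;> linarith

variable {m n : ℕ}

lemma numPerfectMatchings_gridGraph_sq (hn : Even n) :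
    (numPerfectMatchings (gridGraph m n) : ℝ) ^ 2 =
      ∏ j : Fin m, Real.cosh ((n + 1) * arsinhAbsCos (pathAngle m j)) /
        Real.cosh (arsinhAbsCos (pathAngle m j)) := by
  have hfactor : ∀ j : Fin m,
      ∏ k : Fin n, (4 * Real.cos (pathAngle m j) ^ 2 + 4 * Real.cos (pathAngle n k) ^ 2) =
        (Real.cosh ((n + 1) * arsinhAbsCos (pathAngle m j)) /
          Real.cosh (arsinhAbsCos (pathAngle m j))) ^ 2 := by
    intro j
    simp only [← prod_sinh_sq_add_cos_pathAngle_sq hn, arsinhAbsCos, Real.sinh_arsinh, sq_abs]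
  have hfour := numPerfectMatchings_gridGraph_pow_four (m := m) hn
  simp only [hfactor, Finset.prod_pow] at hfour
  refine (pow_left_inj₀ (by positivity) (by positivity) two_ne_zero).1 ?_
  rw [← hfour, ← pow_mul]

lemma abs_log_numPerfectMatchings_sub_sum_le (hn : Even n) :
    |Real.log (numPerfectMatchings (gridGraph m n)) -
      n / 2 * ∑ j : Fin m, arsinhAbsCos (pathAngle m j)| ≤ m / 2 * Real.log 2 := by
  set rate : Fin m → ℝ := fun j => arsinhAbsCos (pathAngle m j)
  have hrate : ∀ j, 0 ≤ rate j := fun j => arsinhAbsCos_nonneg _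
  have hlog : 2 * Real.log (numPerfectMatchings (gridGraph m n)) =
      ∑ j, Real.log (Real.cosh ((n + 1) * rate j) / Real.cosh (rate j)) := by
    rw [← Real.log_prod fun j _ => (div_pos (Real.cosh_pos _) (Real.cosh_pos _)).ne',
      ← numPerfectMatchings_gridGraph_sq hn, Real.log_pow, Nat.cast_ofNat]
  have hterm : ∀ j, ‖Real.log (Real.cosh ((n + 1) * rate j) / Real.cosh (rate j)) - n * rate j‖ ≤
      Real.log 2 := fun j => by
    have h := abs_log_cosh_div_cosh_sub_le (hrate j) (mul_nonneg n.cast_add_one_pos.le (hrate j))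
    rwa [add_one_mul, add_sub_cancel_right, ← add_one_mul] at h
  have hsum := norm_sum_le_of_le Finset.univ fun j _ => hterm j
  rw [Finset.sum_sub_distrib, ← hlog, ← Finset.mul_sum, Finset.sum_const, Finset.card_univ,
    Fintype.card_fin, nsmul_eq_mul, Real.norm_eq_abs] at hsum
  calc |Real.log (numPerfectMatchings (gridGraph m n)) - n / 2 * ∑ j, rate j|
    _ = |2 * Real.log (numPerfectMatchings (gridGraph m n)) - n * ∑ j, rate j| / 2 := by
      rw [← abs_of_pos (two_pos (α := ℝ)), ← abs_div, abs_of_pos (two_pos (α := ℝ))]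
      congr 1
      ring
    _ ≤ m * Real.log 2 / 2 := by gcongr
    _ = m / 2 * Real.log 2 := by ring

lemma abs_sum_arsinhAbsCos_pathAngle_sub_le (m : ℕ) :
    |∑ j : Fin m, arsinhAbsCos (pathAngle m j) - (m + 1) / Real.pi * (2 * catalanConstant)| ≤
      Real.pi + 1 := by
  refine (integral_arsinhAbsCos_zero_pi ▸
    abs_sum_pathAngle_sub_integral_le lipschitzWith_arsinhAbsCos m).trans ?_
  rw [NNReal.coe_one, one_mul, abs_of_nonneg (arsinhAbsCos_nonneg 0)]
  gcongr
  exact arsinhAbsCos_zero_le_one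

lemma abs_log_numPerfectMatchings_sub_le_of_even (hn : Even n) :
    |Real.log (numPerfectMatchings (gridGraph m n)) - catalanConstant * m * n / Real.pi| ≤
      (3 + |catalanConstant|) * (m + n) := by
  have hlog := abs_log_numPerfectMatchings_sub_sum_le (m := m) hn
  have hsum := abs_sum_arsinhAbsCos_pathAngle_sub_le m
  set S := ∑ j : Fin m, arsinhAbsCos (pathAngle m j)
  set L := Real.log (numPerfectMatchings (gridGraph m n))
  have hlog_two : Real.log 2 ≤ 1 := by linarith [Real.log_two_lt_d9]
  have hpi : Real.pi + 1 ≤ 5 := by linarith [Real.pi_le_four]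
  calc |L - catalanConstant * m * n / Real.pi|
    _ = |(L - n / 2 * S) + n / 2 * (S - (m + 1) / Real.pi * (2 * catalanConstant)) +
          n * (catalanConstant / Real.pi)| := by
      congr 1
      field_simp
      ring
    _ ≤ |L - n / 2 * S| + n / 2 * |S - (m + 1) / Real.pi * (2 * catalanConstant)| +
          n * (|catalanConstant| / Real.pi) := by
      refine (abs_add_three _ _ _).trans_eq ?_
      rw [abs_mul, abs_mul, abs_div, abs_div, abs_of_pos Real.pi_pos, Nat.abs_cast, Nat.abs_ofNat]
    _ ≤ m / 2 * 1 + n / 2 * 5 + n * |catalanConstant| := by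
      gcongr
      · exact hlog.trans (by gcongr)
      · exact hsum.trans hpi
      · exact div_le_self (abs_nonneg _) (by linarith [Real.pi_gt_three])
    _ ≤ (3 + |catalanConstant|) * (m + n) := by
      have hm : 0 ≤ |catalanConstant| * m := by positivity
      linarith [m.cast_nonneg (α := ℝ), n.cast_nonneg (α := ℝ)]

/-- The transposition of the `m × n` grid onto the `n × m` grid. -/
def gridGraphSwap (m n : ℕ) : gridGraph m n ≃g gridGraph n m where
  toEquiv := Equiv.prodComm _ _
  map_rel_iff' := by
    rintro ⟨a, b⟩ ⟨c, d⟩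
    simp only [gridGraph_adj_iff, Equiv.prodComm_apply, Prod.swap]
    tauto

end Asymptotics

/-- The number of domino tilings of an m×n rectangle is exp(Gmn/π + O(m+n)),
where G is Catalan's constant: there is a constant C > 0 such that for all m, n ≥ 1
with mn even, |log N(m,n) - Gmn/π| ≤ C(m+n). -/
theorem log_numPerfectMatchings_rect :
    ∃ C : ℝ, 0 < C ∧ ∀ m n : ℕ, 0 < m → 0 < n → Even (m * n) →
      |Real.log (numPerfectMatchings (gridGraph m n)) -
        catalanConstant * m * n / Real.pi| ≤ C * (m + n) := by
  refine ⟨3 + |catalanConstant|, by positivity, fun m n _ _ hmn => ?_⟩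
  rcases Nat.even_mul.1 hmn with hm | hn
  · rw [numPerfectMatchings_congr (gridGraphSwap m n), mul_right_comm, add_comm (m : ℝ)]
    exact abs_log_numPerfectMatchings_sub_le_of_even hm
  · exact abs_log_numPerfectMatchings_sub_le_of_even hn
end
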